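/- Let c₁, c₃ ∈ 𝔽_p and set Ψ₂ = Σ_{a,b ∈ 𝔽_q} Σ_{x ∈ 𝔽_p^*} ζ_p^{x·Tr(a²) − x·c₁} Σ_{z ∈ 𝔽_p^*} ζ_p^{z·Tr(ab) − z·c₃}. Then Ψ₂ = p^m(p−1)² if c₁ = 0 and c₃ = 0; Ψ₂ = −p^m(p−1) if exactly one of c₁, c₃ is nonzero; and Ψ₂ = p^m if c₁ ≠ 0 and c₃ ≠ 0. -/

import Mathlib

open Finset
open scoped Classical

noncomputable section

/-- `ζ_p = exp(2πi/p)`. -/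
def zeta (p : ℕ) : ℂ := Complex.exp (2 * Real.pi * Complex.I / p)

/-- The canonical additive character of `ℤ/p`: `χ̄₁(c) = ζ_p^c`. -/
def chiBar (p : ℕ) (c : ZMod p) : ℂ := zeta p ^ c.val

/-- The quadratic character of `(ℤ/p)^*`, extended by `η̄(0) = 0`. -/
def etaBar (p : ℕ) (c : ZMod p) : ℂ :=
  if c = 0 then 0 else if IsSquare c then 1 else -1

/-- The quadratic character of `F^*`, extended by `η(0) = 0`. -/
def etaQ (F : Type) [Field F] (x : F) : ℂ :=
  if x = 0 then 0 else if IsSquare x then 1 else -1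

/-- The absolute trace map from `F` to `ℤ/p`. -/
def Trq (p : ℕ) (F : Type) [Field F] [Algebra (ZMod p) F] (x : F) : ZMod p :=
  Algebra.trace (ZMod p) F x

/-- The canonical additive character of `F`: `χ₁(x) = ζ_p^{Tr x}`. -/
def chiQ (p : ℕ) (F : Type) [Field F] [Algebra (ZMod p) F] (x : F) : ℂ :=
  chiBar p (Trq p F x)

/-- The quadratic Gauss sum `G` over `F`. -/
def GaussQ (p : ℕ) (F : Type) [Field F] [Fintype F] [Algebra (ZMod p) F] : ℂ :=
  ∑ x ∈ univ.filter (fun x : F => x ≠ 0), etaQ F x * chiQ p F x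

/-- The quadratic Gauss sum `Ḡ` over `ℤ/p`. -/
def GaussP (p : ℕ) [NeZero p] : ℂ :=
  ∑ y ∈ univ.filter (fun y : ZMod p => y ≠ 0), etaBar p y * chiBar p y

/-!
Only `a = 0` contributes. For `a ≠ 0` and `z ≠ 0` the map `b ↦ z Tr(ab)` is a nonzero linear
functional, because the trace form is nondegenerate, so the character sum over `b` vanishes. At
`a = 0` the summand no longer depends on `b`, which gives the factor `q`, and it is a product of two
sums `∑ x ≠ 0, ζ_p^{-xc}`, each of which is `p - 1` or `-1` according as `c = 0` or `c ≠ 0`.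
The same argument applies to any pairing with trivial left kernel in place of `Tr(ab)` and any
function vanishing at `0` in place of `Tr(a²)`.
-/

section AddChar

variable {R : Type*} [CommRing R] [IsDomain R]

section CommRing

variable {K : Type*} [CommRing K] {ψ : AddChar K R}

lemma sum_ne_zero_addChar_mul [Fintype K] [DecidableEq K] (hψ : ψ.IsPrimitive) (c : K) :
    ∑ x ∈ univ.filter (fun x : K => x ≠ 0), ψ (x * c) =
      if c = 0 then (Fintype.card K : R) - 1 else -1 := by
  rw [filter_ne', sum_erase_eq_sub (mem_univ 0), AddChar.sum_mulShift c hψ, zero_mul,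
    ψ.map_zero_eq_one, Nat.cast_ite, Nat.cast_zero, ite_sub, zero_sub]

lemma sum_addChar_mul_sub_eq_zero {W : Type*} [AddGroup W] [Fintype W]
    (hψ : ψ.IsPrimitive) {φ : W →+ K} (hφ : Function.Surjective φ) {z : K} (hz : z ≠ 0) (c : K) :
    ∑ w, ψ (z * φ w - z * c) = 0 := by
  have hne : (ψ.mulShift z).compAddMonoidHom φ ≠ 1 := fun h =>
    hψ hz (AddChar.compAddMonoidHom_injective_left φ hφ h)
  have hsum : ∑ w, ψ (z * φ w) = 0 := AddChar.sum_eq_zero_of_ne_one hne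
  simp only [sub_eq_add_neg, ψ.map_add_eq_mul, ← sum_mul, hsum, zero_mul]

end CommRing

variable {K V W : Type*} [Field K] [Fintype K] [DecidableEq K] [AddCommGroup V] [Module K V]
  [Fintype V] [AddCommGroup W] [Module K W] [Fintype W] {ψ : AddChar K R}

lemma sum_sum_mul_sum_addChar_pairing (hψ : ψ.IsPrimitive) {B : V →ₗ[K] W →ₗ[K] K}
    (hB : B.SeparatingLeft) (g : V → R) (c : K) :
    ∑ v, ∑ w, g v * ∑ z ∈ univ.filter (fun z : K => z ≠ 0), ψ (z * B v w - z * c) =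
      Fintype.card W * (g 0 * ∑ z ∈ univ.filter (fun z : K => z ≠ 0), ψ (z * -c)) := by
  rw [Fintype.sum_eq_single (0 : V)]
  · simp only [map_zero, LinearMap.zero_apply, mul_zero, zero_sub, mul_neg, sum_const, card_univ,
      nsmul_eq_mul]
  · intro v hv
    have hBv : B v ≠ 0 := fun h => hv (LinearMap.separatingLeft_iff_linear_nontrivial.1 hB v h)
    rw [← mul_sum, sum_comm]
    refine mul_eq_zero_of_right _ (sum_eq_zero fun z hz => ?_)
    exact sum_addChar_mul_sub_eq_zero (φ := (B v).toAddMonoidHom) hψ (LinearMap.surjective hBv)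
      (mem_filter.1 hz).2 c

theorem Psi2_eval_general (hψ : ψ.IsPrimitive) {B : V →ₗ[K] W →ₗ[K] K} (hB : B.SeparatingLeft)
    {f : V → K} (hf : f 0 = 0) (c₁ c₃ : K) :
    ∑ v, ∑ w, (∑ x ∈ univ.filter (fun x : K => x ≠ 0), ψ (x * f v - x * c₁)) *
        (∑ z ∈ univ.filter (fun z : K => z ≠ 0), ψ (z * B v w - z * c₃)) =
      (Fintype.card W : R) * ((if c₁ = 0 then (Fintype.card K : R) - 1 else -1) *
        (if c₃ = 0 then (Fintype.card K : R) - 1 else -1)) := by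
  rw [sum_sum_mul_sum_addChar_pairing hψ hB]
  simp only [hf, mul_zero, zero_sub, ← mul_neg, sum_ne_zero_addChar_mul hψ, neg_eq_zero]

end AddChar

lemma chiBar_eq_stdAddChar (p : ℕ) [NeZero p] (c : ZMod p) : chiBar p c = ZMod.stdAddChar c := by
  have h := ZMod.stdAddChar_coe (N := p) (c.val : ℤ)
  rw [Int.cast_natCast, ZMod.natCast_zmod_val] at h
  rw [h, chiBar, zeta, ← Complex.exp_nat_mul]
  congr 1
  push_cast
  ring

theorem Psi2_eval (p m : ℕ) [Fact (Nat.Prime p)] (hp : Odd p)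
    (F : Type) [Field F] [Fintype F] [Algebra (ZMod p) F]
    (hm : 0 < m) (hq : Fintype.card F = p ^ m)
    (c₁ c₃ : ZMod p) :
    (c₁ = 0 ∧ c₃ = 0 →
      (∑ a : F, ∑ b : F,
      (∑ x ∈ univ.filter (fun x : ZMod p => x ≠ 0), chiBar p (x * Trq p F (a ^ 2) - x * c₁)) *
      (∑ z ∈ univ.filter (fun z : ZMod p => z ≠ 0), chiBar p (z * Trq p F (a * b) - z * c₃))) = (p : ℂ) ^ m * ((p : ℂ) - 1) ^ 2) ∧
    (c₁ = 0 ∧ c₃ ≠ 0 →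
      (∑ a : F, ∑ b : F,
      (∑ x ∈ univ.filter (fun x : ZMod p => x ≠ 0), chiBar p (x * Trq p F (a ^ 2) - x * c₁)) *
      (∑ z ∈ univ.filter (fun z : ZMod p => z ≠ 0), chiBar p (z * Trq p F (a * b) - z * c₃))) = -((p : ℂ) ^ m * ((p : ℂ) - 1))) ∧
    (c₁ ≠ 0 ∧ c₃ = 0 →
      (∑ a : F, ∑ b : F,
      (∑ x ∈ univ.filter (fun x : ZMod p => x ≠ 0), chiBar p (x * Trq p F (a ^ 2) - x * c₁)) *
      (∑ z ∈ univ.filter (fun z : ZMod p => z ≠ 0), chiBar p (z * Trq p F (a * b) - z * c₃))) = -((p : ℂ) ^ m * ((p : ℂ) - 1))) ∧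
    (c₁ ≠ 0 ∧ c₃ ≠ 0 →
      (∑ a : F, ∑ b : F,
      (∑ x ∈ univ.filter (fun x : ZMod p => x ≠ 0), chiBar p (x * Trq p F (a ^ 2) - x * c₁)) *
      (∑ z ∈ univ.filter (fun z : ZMod p => z ≠ 0), chiBar p (z * Trq p F (a * b) - z * c₃))) = (p : ℂ) ^ m) := by
  have key := Psi2_eval_general (ZMod.isPrimitive_stdAddChar p)
    (traceForm_nondegenerate (ZMod p) F).1 (f := fun a : F => Trq p F (a ^ 2)) (by simp [Trq]) c₁ c₃
  simp only [Algebra.traceForm_apply, ZMod.card, hq, Nat.cast_pow, Trq] at key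
  simp only [chiBar_eq_stdAddChar, Trq, key]
  refine ⟨?_, ?_, ?_, ?_⟩ <;> rintro ⟨h₁, h₃⟩ <;> simp only [h₁, h₃, if_true, if_false] <;> ring
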